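/- Let P and P' be convex polytopes in ℝ³ with non-empty interior such that (P, −P) and (P', −P') are synisothetic. Call a facet F = P_w of P positive (respectively, negative) if there exists x ∈ ℝ³ with F = P'_w + x and cone(P,F) = cone(P', P'_w) (respectively, F = (−P')_w + x and cone(P,F) = cone(−P', (−P')_w)) but the other alternative fails; call F neutral if both alternatives hold. Then: if no facet of P is negative, P' is a translate of P; if no facet of P is positive, P' is a translate of −P; and if every facet of P is neutral, then both P and P' are centrally symmetric. -/

import Mathlib

open MeasureTheory Pointwise

/-- The exposed face of `P` in direction `w`: `P_w = {x ∈ P : x·w = h_P(w)}`. -/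
def exposedFace (P : Set (EuclideanSpace ℝ (Fin 3)))
    (w : EuclideanSpace ℝ (Fin 3)) : Set (EuclideanSpace ℝ (Fin 3)) :=
  {x ∈ P | ∀ y ∈ P, @inner ℝ _ _ w y ≤ @inner ℝ _ _ w x}

/-- The support cone of `P` at a face `F`:
`cone(P,F) = {μ(y − x) : y ∈ P, μ ≥ 0}` for `x ∈ relint F`. -/
def supportCone (P F : Set (EuclideanSpace ℝ (Fin 3))) :
    Set (EuclideanSpace ℝ (Fin 3)) :=
  {v | ∃ x ∈ intrinsicInterior ℝ F, ∃ y ∈ P, ∃ μ : ℝ, 0 ≤ μ ∧ v = μ • (y - x)}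

/-- `F` is a proper face of the polytope `P`: an exposed face in some unit direction. -/
def IsProperFace (P F : Set (EuclideanSpace ℝ (Fin 3))) : Prop :=
  ∃ w : EuclideanSpace ℝ (Fin 3), ‖w‖ = 1 ∧ F = exposedFace P w

/-- The face `F` of `P` and the face `G` of `Q` are isothetic:
`G` is a translate of `F` and `cone(P,F) = cone(Q,G)`. -/
def Isothetic (P F Q G : Set (EuclideanSpace ℝ (Fin 3))) : Prop :=
  (∃ t : EuclideanSpace ℝ (Fin 3), G = (t + ·) '' F) ∧ supportCone P F = supportCone Q G

/-- The pairs `(P₁, P₂)` and `(Q₁, Q₂)` are synisothetic: every proper face of `P₁` or of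
`P₂` is isothetic to some proper face of `Q₁` or of `Q₂`, and conversely. -/
def Synisothetic (P₁ P₂ Q₁ Q₂ : Set (EuclideanSpace ℝ (Fin 3))) : Prop :=
  (∀ F, IsProperFace P₁ F →
    ∃ G, (IsProperFace Q₁ G ∧ Isothetic P₁ F Q₁ G) ∨ (IsProperFace Q₂ G ∧ Isothetic P₁ F Q₂ G)) ∧
  (∀ F, IsProperFace P₂ F →
    ∃ G, (IsProperFace Q₁ G ∧ Isothetic P₂ F Q₁ G) ∨ (IsProperFace Q₂ G ∧ Isothetic P₂ F Q₂ G)) ∧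
  (∀ G, IsProperFace Q₁ G →
    ∃ F, (IsProperFace P₁ F ∧ Isothetic Q₁ G P₁ F) ∨ (IsProperFace P₂ F ∧ Isothetic Q₁ G P₂ F)) ∧
  (∀ G, IsProperFace Q₂ G →
    ∃ F, (IsProperFace P₁ F ∧ Isothetic Q₂ G P₁ F) ∨ (IsProperFace P₂ F ∧ Isothetic Q₂ G P₂ F))

/-- A (compact) convex polytope: the convex hull of a finite set. -/
def IsPolytope (P : Set (EuclideanSpace ℝ (Fin 3))) : Prop :=
  ∃ S : Finset (EuclideanSpace ℝ (Fin 3)),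
    P = convexHull ℝ (S : Set (EuclideanSpace ℝ (Fin 3)))

/-- The positive alternative for the face of `P` in direction `w` relative to `P'`:
there is a translation carrying `P'_w` to `P_w` and the support cones agree,
`cone(P, P_w) = cone(P', P'_w)`. -/
def PosAlt (P P' : Set (EuclideanSpace ℝ (Fin 3))) (w : EuclideanSpace ℝ (Fin 3)) : Prop :=
  ∃ x : EuclideanSpace ℝ (Fin 3),
    exposedFace P w = (x + ·) '' exposedFace P' w ∧
    supportCone P (exposedFace P w) = supportCone P' (exposedFace P' w)

/-- `w` is a unit direction in which the exposed face of `P ⊆ ℝ³` is a facet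
(a two-dimensional face). -/
def IsFacetDir (P : Set (EuclideanSpace ℝ (Fin 3))) (w : EuclideanSpace ℝ (Fin 3)) : Prop :=
  ‖w‖ = 1 ∧ Module.finrank ℝ (vectorSpan ℝ (exposedFace P w)) = 2

/-! Let `l ≠ 0` be a functional that is not normal to a facet of `P` or of `Q`, and suppose `dim Q_l
≤ dim P_l`. Tilt `l` along functionals vanishing on the direction of `P_l` until that face grows. By
downward induction on the dimension, the larger face reached in this way is a translate of the
corresponding face of `Q`. Tilting back, the translate of `P_l` cannot leave the exposed face of `Q`
before `l`, since at the moment of leaving the exposed face of `Q` would be too large; hence `P_l`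
fits into `Q_l` up to translation, so the two dimensions agree, and by symmetry the two faces are
translates. Thus polytopes whose facets are translates in each normal direction have translated
faces in every direction.

For `l'` near `l` the face `P_{l'}` is a face of `P_l`, so the translation vector is locally
constant in `l`, hence constant on the punctured dual space, which is connected in dimension at
least two. By Hahn–Banach `Q` is then a translate of `P`.

In the situation of the theorem, a facet determines its normal line and the support cone determines
the sign of the normal, so each facet of `P` matches the face of `P'` or of `-P'` in the same
direction. -/

open Filter Topology Module

section Exposed

variable {E : Type*} [NormedAddCommGroup E] [NormedSpace ℝ E] {A F P : Set E}
  {l l' : StrongDual ℝ E} {x y : E}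

theorem toExposed_subset : l.toExposed P ⊆ P := fun _ hx => hx.1

theorem apply_eq_of_mem_toExposed (hx : x ∈ l.toExposed P) (hy : y ∈ l.toExposed P) : l x = l y :=
  (hy.2 x hx.1).antisymm (hx.2 y hy.1)

theorem toExposed_nonempty (hP : IsCompact P) (hne : P.Nonempty) (l : StrongDual ℝ E) :
    (l.toExposed P).Nonempty :=
  hP.exists_isMaxOn hne l.continuous.continuousOn

theorem toExposed_smul {c : ℝ} (hc : 0 < c) (l : StrongDual ℝ E) (P : Set E) :
    (c • l).toExposed P = l.toExposed P := by
  ext x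
  simp [ContinuousLinearMap.toExposed, hc]

theorem toExposed_vadd (l : StrongDual ℝ E) (x : E) (P : Set E) :
    l.toExposed (x +ᵥ P) = x +ᵥ l.toExposed P := by
  ext y
  simp only [ContinuousLinearMap.toExposed, Set.mem_vadd_set_iff_neg_vadd_mem]
  constructor
  · rintro ⟨hy, hmax⟩
    refine ⟨hy, fun z hz => ?_⟩
    simpa [add_comm] using hmax (x + z) (by simpa using hz)
  · rintro ⟨hy, hmax⟩
    exact ⟨hy, fun z hz => by simpa using hmax _ hz⟩

theorem toExposed_neg (l : StrongDual ℝ E) (P : Set E) :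
    l.toExposed (-P) = -((-l).toExposed P) := by
  ext y
  simp only [ContinuousLinearMap.toExposed, Set.mem_neg]
  refine and_congr_right fun _ => ⟨fun h z hz => ?_, fun h z hz => ?_⟩
  · simpa using h (-z) (by simpa using hz)
  · simpa using h (-z) hz

theorem vectorSpan_le_ker_iff : vectorSpan ℝ A ≤ l.ker ↔ ∀ x ∈ A, ∀ y ∈ A, l x = l y := by
  rw [vectorSpan, Submodule.span_le]
  refine ⟨fun h x hx y hy => ?_, fun h => ?_⟩
  · exact sub_eq_zero.1 ((map_sub l x y).symm.trans (h (Set.vsub_mem_vsub hx hy)))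
  · rintro _ ⟨x, hx, y, hy, rfl⟩
    simp [h x hx y hy]

theorem vectorSpan_toExposed_le_ker (l : StrongDual ℝ E) (P : Set E) :
    vectorSpan ℝ (l.toExposed P) ≤ l.ker :=
  vectorSpan_le_ker_iff.2 fun _ hx _ hy => apply_eq_of_mem_toExposed hx hy

theorem toExposed_eq_self (h : vectorSpan ℝ A ≤ l.ker) : l.toExposed A = A :=
  toExposed_subset.antisymm fun _ hx =>
    ⟨hx, fun _ hy => (vectorSpan_le_ker_iff.1 h _ hy _ hx).le⟩

theorem toExposed_eq_of_toExposed_subset (hP : IsCompact P) (hA : A ⊆ P)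
    (hl : l.toExposed P ⊆ A) : l.toExposed P = l.toExposed A := by
  refine Set.Subset.antisymm (fun x hx => ⟨hl hx, fun y hy => hx.2 y (hA hy)⟩) fun x hx => ?_
  obtain ⟨z, hz⟩ := toExposed_nonempty hP ⟨x, hA hx.1⟩ l
  exact ⟨hA hx.1, fun y hy => (hz.2 y hy).trans (hx.2 z (hl hz))⟩

theorem isClosed_setOf_subset_toExposed (P F : Set E) :
    IsClosed {l : StrongDual ℝ E | F ⊆ l.toExposed P} := by
  have heq : {l : StrongDual ℝ E | F ⊆ l.toExposed P} =
      ⋂ x ∈ F, {_l | x ∈ P} ∩ ⋂ y ∈ P, {l | l y ≤ l x} := by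
    ext l
    simp [Set.subset_def, ContinuousLinearMap.toExposed]
  rw [heq]
  refine isClosed_biInter fun x _ => isClosed_const.inter (isClosed_biInter fun y _ => ?_)
  exact isClosed_le (by fun_prop) (by fun_prop)

theorem convex_setOf_subset_toExposed (P F : Set E) :
    Convex ℝ {l : StrongDual ℝ E | F ⊆ l.toExposed P} := by
  intro l hl l' hl' a b ha hb _ x hx
  refine ⟨(hl hx).1, fun y hy => ?_⟩
  exact add_le_add (mul_le_mul_of_nonneg_left ((hl hx).2 y hy) ha)
    (mul_le_mul_of_nonneg_left ((hl' hx).2 y hy) hb)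

theorem toExposed_subset_of_mem_openSegment {l₁ : StrongDual ℝ E} (hl₁ : l₁ ∈ openSegment ℝ l l')
    (hne : (l.toExposed P ∩ l'.toExposed P).Nonempty) : l₁.toExposed P ⊆ l'.toExposed P := by
  obtain ⟨a, b, ha, hb, -, rfl⟩ := hl₁
  obtain ⟨z, hz, hz'⟩ := hne
  intro x hx
  refine ⟨hx.1, fun y hy => (hz'.2 y hy).trans ?_⟩
  have hzx : a * l z + b * l' z ≤ a * l x + b * l' x := hx.2 z hz.1
  have hxz : a * l x ≤ a * l z := mul_le_mul_of_nonneg_left (hz.2 x hx.1) ha.le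
  exact le_of_mul_le_mul_left (by linarith) hb

theorem subset_of_forall_toExposed_subset {B : Set E} (hA : IsCompact A) (hB : Convex ℝ B)
    (hBc : IsClosed B) (hne : B.Nonempty) (h : ∀ l : StrongDual ℝ E, l ≠ 0 → l.toExposed A ⊆ B) :
    A ⊆ B := by
  intro a ha
  by_contra haB
  obtain ⟨f, u, hfB, hfa⟩ := geometric_hahn_banach_closed_point hB hBc haB
  have hf : f ≠ 0 := by
    rintro rfl
    obtain ⟨b, hb⟩ := hne
    exact (hfB b hb).not_gt hfa
  obtain ⟨z, hz⟩ := toExposed_nonempty hA ⟨a, ha⟩ f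
  exact ((hfB z (h f hf hz)).trans hfa).not_ge (hz.2 a ha)

end Exposed

theorem exists_eq_vadd_comm {G α : Type*} [AddGroup G] [AddAction G α] {A B : Set α} :
    (∃ x : G, A = x +ᵥ B) ↔ ∃ x : G, B = x +ᵥ A := by
  constructor <;> exact fun ⟨x, hx⟩ => ⟨-x, by rw [hx, neg_vadd_vadd]⟩

section Translates

variable {E : Type*} [NormedAddCommGroup E] [NormedSpace ℝ E] {K L : Set E} {x y : E}

theorem eq_zero_of_vadd_subset_self (hK : IsCompact K) (hne : K.Nonempty) (h : x +ᵥ K ⊆ K) :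
    x = 0 := by
  refine SeparatingDual.eq_zero_of_forall_dual_eq_zero (R := ℝ) fun f => ?_
  have hle (g : StrongDual ℝ E) : g x ≤ 0 := by
    obtain ⟨z, hzK, hz⟩ := toExposed_nonempty hK hne g
    simpa using hz (x + z) (h (Set.vadd_mem_vadd_set hzK))
  exact le_antisymm (hle f) (by simpa using hle (-f))

theorem eq_of_vadd_eq_vadd (hK : IsCompact K) (hne : K.Nonempty) (h : x +ᵥ K = y +ᵥ K) :
    x = y := by
  rw [← neg_add_eq_zero, add_comm]
  refine eq_zero_of_vadd_subset_self hK hne ?_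
  rw [add_comm, add_vadd, ← h, neg_vadd_vadd]

theorem eq_vadd_of_vadd_subset_of_vadd_subset (hK : IsCompact K) (hne : K.Nonempty)
    (hx : x +ᵥ K ⊆ L) (hy : y +ᵥ L ⊆ K) : L = x +ᵥ K := by
  have hyx : y + x = 0 := eq_zero_of_vadd_subset_self hK hne <| by
    rw [add_vadd]
    exact (Set.vadd_set_mono hx).trans hy
  refine Set.Subset.antisymm ?_ hx
  rwa [Set.subset_vadd_set_iff, neg_eq_of_add_eq_zero_left hyx]

end Translates

/-- A convex polytope of a real vector space: the convex hull of a finite set, possibly empty. -/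
def IsConvexPolytope {E : Type*} [AddCommGroup E] [Module ℝ E] (P : Set E) : Prop :=
  ∃ S : Set E, S.Finite ∧ P = convexHull ℝ S

section Polytope

variable {E : Type*} [AddCommGroup E] [Module ℝ E] {P : Set E}

protected theorem IsConvexPolytope.convex (hP : IsConvexPolytope P) : Convex ℝ P := by
  obtain ⟨S, -, rfl⟩ := hP
  exact convex_convexHull ℝ S

protected theorem IsConvexPolytope.neg (hP : IsConvexPolytope P) : IsConvexPolytope (-P) := by
  obtain ⟨S, hS, rfl⟩ := hP
  exact ⟨-S, hS.neg, (convexHull_neg S).symm⟩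

theorem eq_convexHull_inter_of_isExtreme {S K : Set E}
    (hK : IsExtreme ℝ (convexHull ℝ S) K) (hconv : Convex ℝ K) : K = convexHull ℝ (S ∩ K) := by
  refine Set.Subset.antisymm (fun x hx => ?_) (convexHull_min Set.inter_subset_right hconv)
  suffices h : convexHull ℝ S ⊆ {x ∈ convexHull ℝ S | x ∈ K → x ∈ convexHull ℝ (S ∩ K)} from
    (h (hK.subset hx)).2 hx
  refine convexHull_min (fun s hs => ⟨subset_convexHull ℝ S hs,
    fun hsK => subset_convexHull ℝ _ ⟨hs, hsK⟩⟩) (convex_iff_openSegment_subset.2 ?_)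
  intro y hy z hz x hx
  refine ⟨(convex_convexHull ℝ S).openSegment_subset hy.1 hz.1 hx, fun hxK => ?_⟩
  have hyK : y ∈ K := hK.left_mem_of_mem_openSegment hy.1 hz.1 hxK hx
  have hzK : z ∈ K := hK.right_mem_of_mem_openSegment hy.1 hz.1 hxK hx
  exact (convex_convexHull ℝ _).openSegment_subset (hy.2 hyK) (hz.2 hzK) hx

end Polytope

section Faces

variable {E : Type*} [NormedAddCommGroup E] [NormedSpace ℝ E] {F P Q : Set E}
  {l l' : StrongDual ℝ E} {x : E}

namespace IsConvexPolytope

protected theorem isCompact (hP : IsConvexPolytope P) : IsCompact P := by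
  obtain ⟨S, hS, rfl⟩ := hP
  exact hS.isCompact_convexHull (𝕜 := ℝ)

theorem eventually_toExposed_subset (hP : IsConvexPolytope P) (l : StrongDual ℝ E) :
    ∀ᶠ l' in 𝓝 l, l'.toExposed P ⊆ l.toExposed P := by
  obtain ⟨S, hS, rfl⟩ := hP
  have hvertices : ∀ᶠ l' in 𝓝 l, ∀ s ∈ S,
      s ∈ l'.toExposed (convexHull ℝ S) → s ∈ l.toExposed (convexHull ℝ S) := by
    refine hS.eventually_all.2 fun s _ => ?_
    by_cases hs : s ∈ l.toExposed (convexHull ℝ S)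
    · exact Eventually.of_forall fun _ _ => hs
    · have hclosed := isClosed_setOf_subset_toExposed (convexHull ℝ S) {s}
      simp only [Set.singleton_subset_iff] at hclosed
      filter_upwards [hclosed.isOpen_compl.mem_nhds hs] with l' hl' hmem using (hl' hmem).elim
  filter_upwards [hvertices] with l' hl'
  have hconv (m : StrongDual ℝ E) : Convex ℝ (m.toExposed (convexHull ℝ S)) :=
    ContinuousLinearMap.toExposed.isExposed.convex (convex_convexHull ℝ S)
  rw [eq_convexHull_inter_of_isExtreme ContinuousLinearMap.toExposed.isExposed.isExtreme (hconv l')]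
  exact convexHull_min (fun s hs => hl' s hs.1 hs.2) (hconv l)

theorem eventually_toExposed_eq (hP : IsConvexPolytope P) (l : StrongDual ℝ E) :
    ∀ᶠ l' in 𝓝 l, l'.toExposed P = l'.toExposed (l.toExposed P) := by
  filter_upwards [hP.eventually_toExposed_subset l] with l' hl'
  exact toExposed_eq_of_toExposed_subset hP.isCompact toExposed_subset hl'

theorem eventually_toExposed_eq_vadd (hP : IsConvexPolytope P) (hQ : IsConvexPolytope Q)
    (h : l.toExposed Q = x +ᵥ l.toExposed P) :
    ∀ᶠ l' in 𝓝 l, l'.toExposed Q = x +ᵥ l'.toExposed P := by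
  filter_upwards [hP.eventually_toExposed_eq l, hQ.eventually_toExposed_eq l] with l' hP' hQ'
  rw [hQ', h, toExposed_vadd, ← hP']

theorem vectorSpan_lt_of_frequently (hP : IsConvexPolytope P) (hF : F ⊆ l.toExposed P)
    (h : ∃ᶠ l' in 𝓝 l, vectorSpan ℝ F ≤ l'.ker ∧ ¬ F ⊆ l'.toExposed P) :
    vectorSpan ℝ F < vectorSpan ℝ (l.toExposed P) := by
  refine (vectorSpan_mono ℝ hF).lt_of_ne fun heq => ?_
  obtain ⟨l', ⟨hker, hnot⟩, hl'⟩ := (h.and_eventually (hP.eventually_toExposed_eq l)).exists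
  rw [hl', toExposed_eq_self (heq ▸ hker)] at hnot
  exact hnot hF

theorem exists_mem_segment_vectorSpan_lt (hP : IsConvexPolytope P) (hF : F ⊆ l.toExposed P)
    (hker : vectorSpan ℝ F ≤ l'.ker) (hF' : ¬ F ⊆ l'.toExposed P) :
    ∃ l₁ ∈ segment ℝ l l', F ⊆ l₁.toExposed P ∧
      vectorSpan ℝ F < vectorSpan ℝ (l₁.toExposed P) := by
  let γ : unitInterval → StrongDual ℝ E := fun t => AffineMap.lineMap l l' (t : ℝ)
  have hγ : Continuous γ := by fun_prop
  have hclosed : IsClosed {t | F ⊆ (γ t).toExposed P} :=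
    (isClosed_setOf_subset_toExposed P F).preimage hγ
  have hfrontier : (frontier {t | F ⊆ (γ t).toExposed P}).Nonempty := by
    refine nonempty_frontier_iff.2 ⟨⟨0, by simpa [γ] using hF⟩, fun huniv => hF' ?_⟩
    have h1 : (1 : unitInterval) ∈ {t | F ⊆ (γ t).toExposed P} := huniv ▸ Set.mem_univ _
    simpa [γ] using h1
  obtain ⟨t, ht⟩ := hfrontier
  have hFt : F ⊆ (γ t).toExposed P := hclosed.frontier_subset ht
  refine ⟨γ t, ?_, hFt, hP.vectorSpan_lt_of_frequently hFt ?_⟩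
  · rw [segment_eq_image_lineMap]
    exact ⟨t, t.2, rfl⟩
  · rw [frontier_eq_closure_inter_closure] at ht
    refine hγ.continuousAt.tendsto.frequently ((mem_closure_iff_frequently.1 ht.2).mono ?_)
    refine fun s hs => ⟨fun v hv => ?_, hs⟩
    have hlv : l v = 0 := vectorSpan_toExposed_le_ker l P (vectorSpan_mono ℝ hF hv)
    have hlv' : l' v = 0 := hker hv
    simp [γ, AffineMap.lineMap_apply, hlv, hlv']

end IsConvexPolytope

end Faces

section Facets

variable {E : Type*} [NormedAddCommGroup E] [NormedSpace ℝ E] {P Q : Set E} {l m : StrongDual ℝ E}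

/-- `l` is a normal of a facet of `P`, that is, of a face of codimension one: such a face is
parallel to the whole hyperplane `ker l`, whatever the dimension of the ambient space. -/
def IsFacetNormal (P : Set E) (l : StrongDual ℝ E) : Prop :=
  l ≠ 0 ∧ vectorSpan ℝ (l.toExposed P) = l.ker

theorem vectorSpan_neg {V : Type*} [AddCommGroup V] [Module ℝ V] (s : Set V) :
    vectorSpan ℝ (-s) = vectorSpan ℝ s := by
  have hneg (s : Set V) : vectorSpan ℝ (-s) ≤ vectorSpan ℝ s := by
    rw [vectorSpan, Submodule.span_le]
    rintro _ ⟨x, hx, y, hy, rfl⟩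
    have hmem := vsub_mem_vectorSpan ℝ (Set.mem_neg.1 hy) (Set.mem_neg.1 hx)
    simpa [neg_add_eq_sub] using hmem
  exact (hneg s).antisymm (by simpa using hneg (-s))

theorem isFacetNormal_neg_iff : IsFacetNormal (-P) l ↔ IsFacetNormal P (-l) := by
  simp only [IsFacetNormal, toExposed_neg, vectorSpan_neg, neg_ne_zero]
  have hker : (-l).ker = l.ker := by ext; simp
  rw [hker]

theorem vectorSpan_eq_top_of_interior_nonempty (hint : (interior P).Nonempty) :
    vectorSpan ℝ P = ⊤ :=
  top_unique <| (AffineSubspace.vectorSpan_eq_top_of_affineSpan_eq_top ℝ E E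
    (isOpen_interior.affineSpan_eq_top hint)).ge.trans (vectorSpan_mono ℝ interior_subset)

theorem eq_zero_of_forall_apply_eq {a : E} (hint : (interior P).Nonempty)
    (h : ∀ y ∈ P, l y = l a) : l = 0 := by
  have hker : vectorSpan ℝ P ≤ l.ker :=
    vectorSpan_le_ker_iff.2 fun x hx y hy => (h x hx).trans (h y hy).symm
  rw [vectorSpan_eq_top_of_interior_nonempty hint] at hker
  ext v
  exact hker Submodule.mem_top

theorem eq_zero_of_mem_toExposed_of_mem_toExposed_neg {a : E} (hint : (interior P).Nonempty)
    (h : a ∈ l.toExposed P) (hneg : a ∈ (-l).toExposed P) : l = 0 :=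
  eq_zero_of_forall_apply_eq hint fun y hy =>
    (h.2 y hy).antisymm (neg_le_neg_iff.1 (hneg.2 y hy))

theorem exists_notMem_toExposed_add_smul (hint : (interior P).Nonempty) (l : StrongDual ℝ E)
    (hm : m ≠ 0) (a : E) : ∃ c : ℝ, a ∉ (l + c • m).toExposed P := by
  by_contra! h
  refine hm (eq_zero_of_forall_apply_eq (a := a) hint fun y hy => ?_)
  by_contra hya
  have hsub : m y - m a ≠ 0 := sub_ne_zero.2 hya
  obtain ⟨c, hc⟩ : ∃ c, c * (m y - m a) = l a - l y + 1 := ⟨_, div_mul_cancel₀ _ hsub⟩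
  have hle : l y + c * m y ≤ l a + c * m a := (h c).2 y hy
  linarith

theorem exists_vectorSpan_le_ker_of_not_isFacetNormal [FiniteDimensional ℝ E] (hl : l ≠ 0)
    (h : ¬ IsFacetNormal P l) :
    ∃ m : StrongDual ℝ E, m ≠ 0 ∧ vectorSpan ℝ (l.toExposed P) ≤ m.ker ∧
      ∀ c : ℝ, l + c • m ≠ 0 := by
  have hlt : vectorSpan ℝ (l.toExposed P) < l.ker :=
    (vectorSpan_toExposed_le_ker l P).lt_of_ne fun heq => h ⟨hl, heq⟩
  obtain ⟨v, hlv, hv⟩ := SetLike.exists_of_lt hlt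
  obtain ⟨f, hfv, hf⟩ := Submodule.exists_le_ker_of_notMem hv
  refine ⟨LinearMap.toContinuousLinearMap f, ?_, fun x hx => hf hx, fun c hc => ?_⟩
  · intro h0
    exact hfv (by simpa using DFunLike.congr_fun h0 v)
  · have hlv' : l v = 0 := hlv
    have hcv : c * f v = 0 := by simpa [hlv'] using DFunLike.congr_fun hc v
    obtain rfl : c = 0 := (mul_eq_zero.1 hcv).resolve_right hfv
    exact hl (by simpa using hc)

end Facets

theorem mem_openSegment_of_mem_segment_of_ne {V : Type*} [AddCommGroup V] [Module ℝ V]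
    {x y z w : V} (hy : y ∈ openSegment ℝ x z) (hw : w ∈ segment ℝ y z) (hwz : w ≠ z) :
    w ∈ openSegment ℝ x z := by
  obtain ⟨a, b, ha, hb, hab, rfl⟩ := hy
  obtain ⟨c, d, hc, hd, hcd, rfl⟩ := hw
  obtain rfl | hc := hc.eq_or_lt
  · obtain rfl : d = 1 := by simpa using hcd
    simp at hwz
  · refine ⟨c * a, c * b + d, by positivity, by positivity, ?_, by module⟩
    rw [← add_assoc, ← mul_add, hab, mul_one, hcd]

/-- The dimension of the face of `P` exposed by `l`; it is `0` when that face is empty. -/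
noncomputable def faceDim {E : Type*} [NormedAddCommGroup E] [NormedSpace ℝ E] (P : Set E)
    (l : StrongDual ℝ E) : ℕ :=
  finrank ℝ (vectorSpan ℝ (l.toExposed P))

section Sliding

variable {E : Type*} [NormedAddCommGroup E] [NormedSpace ℝ E] {P Q : Set E}
  {l l₁ : StrongDual ℝ E} {x : E}

theorem IsConvexPolytope.exists_mem_openSegment_vectorSpan_lt (hP : IsConvexPolytope P)
    (hQ : IsConvexPolytope Q) (hPl : l.toExposed P ⊆ l₁.toExposed P)
    (hx : l₁.toExposed Q = x +ᵥ l₁.toExposed P) (hnot : ¬ x +ᵥ l.toExposed P ⊆ l.toExposed Q) :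
    ∃ l₂ ∈ openSegment ℝ l₁ l,
      vectorSpan ℝ (l.toExposed P) < vectorSpan ℝ (l₂.toExposed Q) := by
  have hlim : Tendsto (AffineMap.lineMap l₁ l : ℝ → StrongDual ℝ E) (𝓝[>] 0) (𝓝 l₁) := by
    have hcont : Continuous (AffineMap.lineMap l₁ l : ℝ → StrongDual ℝ E) := by fun_prop
    simpa using (hcont.tendsto 0).mono_left nhdsWithin_le_nhds
  obtain ⟨s, hs, hs01⟩ := ((hlim.eventually (hP.eventually_toExposed_eq_vadd hQ hx)).and
    (Ioo_mem_nhdsGT one_pos)).exists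
  set l' : StrongDual ℝ E := AffineMap.lineMap l₁ l s
  have hl' : l' ∈ openSegment ℝ l₁ l := by
    rw [openSegment_eq_image_lineMap]
    exact ⟨s, hs01, rfl⟩
  have hPl' : l.toExposed P ⊆ l'.toExposed P :=
    (convex_setOf_subset_toExposed P _).openSegment_subset hPl
      (subset_refl (l.toExposed P)) hl'
  obtain ⟨l₂, hl₂, hsub, hlt⟩ := hQ.exists_mem_segment_vectorSpan_lt (F := x +ᵥ l.toExposed P)
    (hs ▸ Set.vadd_set_mono hPl') ((vectorSpan_vadd ℝ _ x).trans_le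
      (vectorSpan_toExposed_le_ker l P)) hnot
  rw [vectorSpan_vadd] at hlt
  refine ⟨l₂, mem_openSegment_of_mem_segment_of_ne hl' hl₂ ?_, hlt⟩
  rintro rfl
  exact hnot hsub

theorem IsConvexPolytope.exists_vadd_toExposed_subset [FiniteDimensional ℝ E]
    (hP : IsConvexPolytope P) (hQ : IsConvexPolytope Q) (hint : (interior P).Nonempty)
    (hl : l ≠ 0) (hfacet : ¬ IsFacetNormal P l)
    (hlarger : ∀ l' : StrongDual ℝ E, l' ≠ 0 →
      vectorSpan ℝ (l.toExposed P) < vectorSpan ℝ (l'.toExposed P) ∨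
        vectorSpan ℝ (l.toExposed P) < vectorSpan ℝ (l'.toExposed Q) →
        ∃ x : E, l'.toExposed Q = x +ᵥ l'.toExposed P) :
    ∃ x : E, x +ᵥ l.toExposed P ⊆ l.toExposed Q := by
  obtain ⟨a, ha⟩ := toExposed_nonempty hP.isCompact (hint.mono interior_subset) l
  obtain ⟨m, hm, hker, hne⟩ := exists_vectorSpan_le_ker_of_not_isFacetNormal hl hfacet
  obtain ⟨c, hc⟩ := exists_notMem_toExposed_add_smul hint l hm a
  have hker' : vectorSpan ℝ (l.toExposed P) ≤ (l + c • m).ker := fun v hv => by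
    have hlv : l v = 0 := vectorSpan_toExposed_le_ker l P hv
    have hmv : m v = 0 := hker hv
    simp [hlv, hmv]
  have hseg : ∀ l' ∈ segment ℝ l (l + c • m), l' ≠ 0 := by
    intro l' hl'
    rw [segment_eq_image'] at hl'
    obtain ⟨s, -, rfl⟩ := hl'
    simpa [smul_smul] using hne (s * c)
  obtain ⟨l₁, hl₁, hPl, hlt⟩ :=
    hP.exists_mem_segment_vectorSpan_lt subset_rfl hker' fun h => hc (h ha)
  obtain ⟨x, hx⟩ := hlarger l₁ (hseg l₁ hl₁) (Or.inl hlt)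
  refine ⟨x, by_contra fun hnot => ?_⟩
  obtain ⟨l₂, hl₂, hlt₂⟩ := hP.exists_mem_openSegment_vectorSpan_lt hQ hPl hx hnot
  have hl₂ne : l₂ ≠ 0 := hseg l₂ <| (convex_segment l _).segment_subset hl₁
    (left_mem_segment ℝ l _) (openSegment_subset_segment ℝ _ _ hl₂)
  obtain ⟨y, hy⟩ := hlarger l₂ hl₂ne (Or.inr hlt₂)
  have hP₂ : l₂.toExposed P ⊆ l.toExposed P :=
    toExposed_subset_of_mem_openSegment hl₂ ⟨a, hPl ha, ha⟩
  rw [hy, vectorSpan_vadd] at hlt₂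
  exact hlt₂.not_ge (vectorSpan_mono ℝ hP₂)

theorem IsConvexPolytope.exists_toExposed_eq_vadd_of_larger [FiniteDimensional ℝ E]
    (hP : IsConvexPolytope P) (hQ : IsConvexPolytope Q) (hPint : (interior P).Nonempty)
    (hQint : (interior Q).Nonempty) (hl : l ≠ 0) (hPl : ¬ IsFacetNormal P l)
    (hQl : ¬ IsFacetNormal Q l)
    (hle : faceDim Q l ≤ faceDim P l)
    (hlarger : ∀ l' : StrongDual ℝ E, l' ≠ 0 → faceDim P l < max (faceDim P l') (faceDim Q l') →
        ∃ x : E, l'.toExposed Q = x +ᵥ l'.toExposed P) :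
    ∃ x : E, l.toExposed Q = x +ᵥ l.toExposed P := by
  obtain ⟨x, hx⟩ := hP.exists_vadd_toExposed_subset hQ hPint hl hPl fun l' hl' h =>
    hlarger l' hl' <| lt_max_iff.2 <|
      h.imp Submodule.finrank_lt_finrank_of_lt Submodule.finrank_lt_finrank_of_lt
  have hspan : vectorSpan ℝ (l.toExposed P) = vectorSpan ℝ (l.toExposed Q) :=
    Submodule.eq_of_le_of_finrank_le ((vectorSpan_vadd ℝ _ x).ge.trans (vectorSpan_mono ℝ hx)) hle
  obtain ⟨y, hy⟩ := hQ.exists_vadd_toExposed_subset hP hQint hl hQl fun l' hl' h =>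
    exists_eq_vadd_comm.1 <| hlarger l' hl' <| lt_max_iff.2 <| (hspan ▸ h.symm).imp
      Submodule.finrank_lt_finrank_of_lt Submodule.finrank_lt_finrank_of_lt
  have hcompact : IsCompact (l.toExposed P) :=
    ContinuousLinearMap.toExposed.isExposed.isCompact hP.isCompact
  exact ⟨x, eq_vadd_of_vadd_subset_of_vadd_subset hcompact
    (toExposed_nonempty hP.isCompact (hPint.mono interior_subset) l) hx hy⟩

theorem IsConvexPolytope.exists_toExposed_eq_vadd [FiniteDimensional ℝ E]
    (hP : IsConvexPolytope P) (hQ : IsConvexPolytope Q) (hPint : (interior P).Nonempty)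
    (hQint : (interior Q).Nonempty)
    (hfacet : ∀ l, IsFacetNormal P l ∨ IsFacetNormal Q l →
      ∃ x : E, l.toExposed Q = x +ᵥ l.toExposed P) (hl : l ≠ 0) :
    ∃ x : E, l.toExposed Q = x +ᵥ l.toExposed P := by
  induction hn : finrank ℝ E - max (faceDim P l) (faceDim Q l)
    using Nat.strong_induction_on generalizing l with
  | _ n ih =>
  subst hn
  by_cases hl' : IsFacetNormal P l ∨ IsFacetNormal Q l
  · exact hfacet l hl'
  push Not at hl'
  have hrank (R : Set E) (m : StrongDual ℝ E) : faceDim R m ≤ finrank ℝ E :=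
    Submodule.finrank_le _
  rcases le_total (faceDim Q l) (faceDim P l) with hle | hle
  · refine hP.exists_toExposed_eq_vadd_of_larger hQ hPint hQint hl hl'.1 hl'.2 hle
      fun m hm hlt => ih _ ?_ hm rfl
    rw [max_eq_left hle]
    exact Nat.sub_lt_sub_left (hlt.trans_le (max_le (hrank P m) (hrank Q m))) hlt
  · refine exists_eq_vadd_comm.1 (hQ.exists_toExposed_eq_vadd_of_larger hP hQint hPint hl
      hl'.2 hl'.1 hle fun m hm hlt => exists_eq_vadd_comm.1 (ih _ ?_ hm rfl))
    rw [max_comm] at hlt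
    rw [max_eq_right hle]
    exact Nat.sub_lt_sub_left (hlt.trans_le (max_le (hrank P m) (hrank Q m))) hlt

end Sliding

section Determination

variable {E : Type*} [NormedAddCommGroup E] [NormedSpace ℝ E] {P Q : Set E}

theorem isPreconnected_compl_zero_strongDual [FiniteDimensional ℝ E] (hdim : 1 < finrank ℝ E) :
    IsPreconnected ({0}ᶜ : Set (StrongDual ℝ E)) := by
  refine (isConnected_compl_singleton_of_one_lt_rank ?_ 0).isPreconnected
  rw [← finrank_eq_rank, ← LinearMap.toContinuousLinearMap.finrank_eq, Subspace.dual_finrank_eq]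
  exact_mod_cast hdim

theorem IsConvexPolytope.exists_forall_toExposed_eq_vadd [FiniteDimensional ℝ E]
    (hdim : 1 < finrank ℝ E) (hP : IsConvexPolytope P) (hQ : IsConvexPolytope Q)
    (hne : P.Nonempty)
    (h : ∀ l : StrongDual ℝ E, l ≠ 0 → ∃ x : E, l.toExposed Q = x +ᵥ l.toExposed P) :
    ∃ x : E, ∀ l : StrongDual ℝ E, l ≠ 0 → l.toExposed Q = x +ᵥ l.toExposed P := by
  have hunique (l : StrongDual ℝ E) (x y : E) (hx : l.toExposed Q = x +ᵥ l.toExposed P)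
      (hy : l.toExposed Q = y +ᵥ l.toExposed P) : x = y :=
    eq_of_vadd_eq_vadd (ContinuousLinearMap.toExposed.isExposed.isCompact hP.isCompact)
      (toExposed_nonempty hP.isCompact hne l) (hx.symm.trans hy)
  have hsame : ∀ l ∈ ({0}ᶜ : Set (StrongDual ℝ E)), ∀ l' ∈ ({0}ᶜ : Set (StrongDual ℝ E)),
      ∀ x : E, l.toExposed Q = x +ᵥ l.toExposed P → l'.toExposed Q = x +ᵥ l'.toExposed P := by
    intro l hl l' hl'
    refine (isPreconnected_compl_zero_strongDual hdim).induction₂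
      (fun l l' => ∀ x : E, l.toExposed Q = x +ᵥ l.toExposed P →
        l'.toExposed Q = x +ᵥ l'.toExposed P) (fun l hl => ?_)
      (fun _ _ _ _ _ _ h₁ h₂ x hx => h₂ x (h₁ x hx)) (fun l l' hl _ h₁ x hx => ?_) hl hl'
    · obtain ⟨x, hx⟩ := h l hl
      filter_upwards [nhdsWithin_le_nhds (hP.eventually_toExposed_eq_vadd hQ hx)]
        with l' hl' y hy
      rwa [← hunique l x y hx hy]
    · obtain ⟨y, hy⟩ := h l hl
      rwa [← hunique l' y x (h₁ y hy) hx]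
  have : Nontrivial E := Module.nontrivial_of_finrank_pos (zero_lt_one.trans hdim)
  obtain ⟨l, hl⟩ := exists_ne (0 : StrongDual ℝ E)
  obtain ⟨x, hx⟩ := h l hl
  exact ⟨x, fun l' hl' => hsame l hl l' hl' x hx⟩

theorem eq_vadd_of_forall_toExposed_eq_vadd {x : E} (hP : IsCompact P) (hPconv : Convex ℝ P)
    (hPne : P.Nonempty) (hQ : IsCompact Q) (hQconv : Convex ℝ Q) (hQne : Q.Nonempty)
    (h : ∀ l : StrongDual ℝ E, l ≠ 0 → l.toExposed Q = x +ᵥ l.toExposed P) : Q = x +ᵥ P := by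
  have hxP : IsCompact (x +ᵥ P) := hP.vadd x
  refine Set.Subset.antisymm
    (subset_of_forall_toExposed_subset hQ (hPconv.vadd x) hxP.isClosed hPne.vadd_set fun l hl => ?_)
    (subset_of_forall_toExposed_subset hxP hQconv hQ.isClosed hQne fun l hl => ?_)
  · exact (h l hl).trans_subset (Set.vadd_set_mono toExposed_subset)
  · rw [toExposed_vadd, ← h l hl]
    exact toExposed_subset

theorem IsConvexPolytope.exists_eq_vadd_of_facets [FiniteDimensional ℝ E]
    (hdim : 1 < finrank ℝ E) (hP : IsConvexPolytope P) (hQ : IsConvexPolytope Q)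
    (hPint : (interior P).Nonempty) (hQint : (interior Q).Nonempty)
    (h : ∀ l, IsFacetNormal P l ∨ IsFacetNormal Q l →
      ∃ x : E, l.toExposed Q = x +ᵥ l.toExposed P) : ∃ x : E, Q = x +ᵥ P := by
  have hPne : P.Nonempty := hPint.mono interior_subset
  obtain ⟨x, hx⟩ := hP.exists_forall_toExposed_eq_vadd hdim hQ hPne fun l =>
    hP.exists_toExposed_eq_vadd hQ hPint hQint h
  exact ⟨x, eq_vadd_of_forall_toExposed_eq_vadd hP.isCompact hP.convex hPne hQ.isCompact
    hQ.convex (hQint.mono interior_subset) hx⟩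

end Determination

section SupportCones

variable {E : Type*} [NormedAddCommGroup E] [NormedSpace ℝ E] {F G P P' Q : Set E}
  {l m : StrongDual ℝ E} {x : E}

/-- The support cone `cone(P, F)` of `P` at `F`, with the vertex `x` ranging over the whole
relative interior of `F`. -/
def faceCone (P F : Set E) : Set E :=
  {v | ∃ x ∈ intrinsicInterior ℝ F, ∃ y ∈ P, ∃ μ : ℝ, 0 ≤ μ ∧ v = μ • (y - x)}

theorem sub_mem_faceCone {y : E} (hx : x ∈ intrinsicInterior ℝ F) (hy : y ∈ P) :
    y - x ∈ faceCone P F :=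
  ⟨x, hx, y, hy, 1, zero_le_one, (one_smul ℝ _).symm⟩

theorem apply_nonpos_of_mem_faceCone {v : E} (hv : v ∈ faceCone P (l.toExposed P)) : l v ≤ 0 := by
  obtain ⟨x, hx, y, hy, μ, hμ, rfl⟩ := hv
  have hyx : l y ≤ l x := (intrinsicInterior_subset hx).2 y hy
  simpa using mul_nonpos_of_nonneg_of_nonpos hμ (sub_nonpos.2 hyx)

theorem mem_toExposed_of_faceCone_subset (h : faceCone P F ⊆ faceCone Q (m.toExposed Q))
    (hF : F ⊆ P) (hx : x ∈ intrinsicInterior ℝ F) : x ∈ m.toExposed P :=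
  ⟨hF (intrinsicInterior_subset hx), fun y hy => by
    simpa using apply_nonpos_of_mem_faceCone (h (sub_mem_faceCone hx hy))⟩

theorem mem_vectorSpan_toExposed_of_mem_faceCone {v : E}
    (hv : v ∈ faceCone P (l.toExposed P)) (hlv : l v = 0) :
    v ∈ vectorSpan ℝ (l.toExposed P) := by
  obtain ⟨x, hx, y, hy, μ, -, rfl⟩ := hv
  have hx' : x ∈ l.toExposed P := intrinsicInterior_subset hx
  obtain rfl | hyx : μ = 0 ∨ l y = l x := by simpa [sub_eq_zero] using hlv
  · simp
  · have hy' : y ∈ l.toExposed P := ⟨hy, fun z hz => (hx'.2 z hz).trans_eq hyx.symm⟩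
    exact Submodule.smul_mem _ μ (vsub_mem_vectorSpan ℝ hy' hx')

theorem vectorSpan_toExposed_le_of_faceCone_eq (h : faceCone Q G = faceCone P (l.toExposed P))
    (hG : G ⊆ Q) (hne : (intrinsicInterior ℝ G).Nonempty) :
    vectorSpan ℝ (l.toExposed Q) ≤ vectorSpan ℝ (l.toExposed P) := by
  obtain ⟨g, hg⟩ := hne
  have hgl : g ∈ l.toExposed Q := mem_toExposed_of_faceCone_subset h.subset hG hg
  rw [vectorSpan_eq_span_vsub_set_right ℝ hgl, Submodule.span_le]
  rintro _ ⟨y, hy, rfl⟩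
  refine mem_vectorSpan_toExposed_of_mem_faceCone (h ▸ sub_mem_faceCone hg hy.1) ?_
  simp [apply_eq_of_mem_toExposed hy hgl]

/-- The face of `P` exposed by `l` is isothetic to the face of `Q` exposed by `m`: it is a translate
of it, and `P` and `Q` have the same support cone there. -/
def FacesIsothetic (P : Set E) (l : StrongDual ℝ E) (Q : Set E) (m : StrongDual ℝ E) : Prop :=
  (∃ x : E, m.toExposed Q = x +ᵥ l.toExposed P) ∧
    faceCone P (l.toExposed P) = faceCone Q (m.toExposed Q)

namespace FacesIsothetic

protected theorem symm (h : FacesIsothetic P l Q m) : FacesIsothetic Q m P l :=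
  ⟨exists_eq_vadd_comm.1 h.1, h.2.symm⟩

theorem vectorSpan_eq (h : FacesIsothetic P l Q m) :
    vectorSpan ℝ (m.toExposed Q) = vectorSpan ℝ (l.toExposed P) := by
  obtain ⟨⟨x, hx⟩, -⟩ := h
  rw [hx, vectorSpan_vadd]

variable [FiniteDimensional ℝ E]

theorem vectorSpan_toExposed_le (h : FacesIsothetic P l Q m) (hQ : IsConvexPolytope Q)
    (hne : Q.Nonempty) : vectorSpan ℝ (l.toExposed Q) ≤ vectorSpan ℝ (l.toExposed P) := by
  have hconv : Convex ℝ (m.toExposed Q) :=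
    ContinuousLinearMap.toExposed.isExposed.convex hQ.convex
  exact vectorSpan_toExposed_le_of_faceCone_eq h.2.symm toExposed_subset
    ((toExposed_nonempty hQ.isCompact hne m).intrinsicInterior hconv)

end FacesIsothetic

theorem exists_eq_smul_of_ker_le (hm : m ≠ 0) (h : l.ker ≤ m.ker) :
    ∃ c : ℝ, c ≠ 0 ∧ m = c • l := by
  have hmem : (m : E →ₗ[ℝ] ℝ) ∈ Submodule.span ℝ (Set.range fun _ : Unit => (l : E →ₗ[ℝ] ℝ)) :=
    mem_span_of_iInf_ker_le_ker (by simpa using h)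
  obtain ⟨c, hc⟩ := Submodule.mem_span_singleton.1 (by simpa using hmem)
  have hmc : m = c • l := ContinuousLinearMap.coe_injective hc.symm
  exact ⟨c, fun h0 => hm (by rw [hmc, h0, zero_smul]), hmc⟩

theorem FacesIsothetic.of_isFacetNormal [FiniteDimensional ℝ E] (h : FacesIsothetic P l Q m)
    (hP : IsConvexPolytope P) (hint : (interior P).Nonempty) (hl : IsFacetNormal P l)
    (hm : m ≠ 0) : FacesIsothetic P l Q l := by
  have hker : l.ker ≤ m.ker := by
    rw [← hl.2, ← h.vectorSpan_eq]
    exact vectorSpan_toExposed_le_ker m Q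
  obtain ⟨c, hc, rfl⟩ := exists_eq_smul_of_ker_le hm hker
  rcases hc.lt_or_gt with hneg | hpos
  · have hconv : Convex ℝ (l.toExposed P) :=
      ContinuousLinearMap.toExposed.isExposed.convex hP.convex
    obtain ⟨x, hx⟩ :=
      (toExposed_nonempty hP.isCompact (hint.mono interior_subset) l).intrinsicInterior hconv
    have hxm : x ∈ (c • l).toExposed P :=
      mem_toExposed_of_faceCone_subset h.2.subset toExposed_subset hx
    rw [← neg_smul_neg c l, toExposed_smul (neg_pos.2 hneg)] at hxm
    exact (hl.1 (eq_zero_of_mem_toExposed_of_mem_toExposed_neg hint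
      (intrinsicInterior_subset hx) hxm)).elim
  · rwa [FacesIsothetic, toExposed_smul hpos] at h

end SupportCones

theorem neg_vadd_set {G : Type*} [AddCommGroup G] (x : G) (A : Set G) :
    -(x +ᵥ A) = -x +ᵥ -A := by
  rw [Set.neg_vadd_set_distrib, op_vadd_eq_vadd]

theorem exists_eq_vadd_neg_of_eq_vadd {G : Type*} [AddCommGroup G] {A B : Set G} {x y : G}
    (hx : B = x +ᵥ A) (hy : B = y +ᵥ -A) :
    (∃ c : G, A = c +ᵥ -A) ∧ ∃ c : G, B = c +ᵥ -B := by
  refine ⟨⟨-x + y, ?_⟩, ⟨y + x, ?_⟩⟩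
  · rw [add_vadd, ← hy, hx, neg_vadd_vadd]
  · rw [add_vadd, show x +ᵥ -B = -A by rw [hx, neg_vadd_set, vadd_neg_vadd], hy]

theorem interior_neg_nonempty {G : Type*} [TopologicalSpace G] [InvolutiveNeg G] [ContinuousNeg G]
    {A : Set G} (h : (interior A).Nonempty) : (interior (-A)).Nonempty := by
  exact (Homeomorph.neg G).preimage_interior A ▸ h.neg

section Synisothetic

variable {E : Type*} [NormedAddCommGroup E] [NormedSpace ℝ E] {P P' : Set E}
  {l : StrongDual ℝ E}

/-- One half of synisotheticity, for families of polytopes: every proper face of a member of `𝒜` is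
isothetic to some proper face of a member of `ℬ`. -/
def FacesMatch (𝒜 ℬ : Set (Set E)) : Prop :=
  ∀ P ∈ 𝒜, ∀ l : StrongDual ℝ E, l ≠ 0 →
    ∃ Q ∈ ℬ, ∃ m : StrongDual ℝ E, m ≠ 0 ∧ FacesIsothetic P l Q m

variable [FiniteDimensional ℝ E]

theorem FacesMatch.facesIsothetic_of_isFacetNormal (h : FacesMatch {P, -P} {P', -P'})
    (hP : IsConvexPolytope P) (hint : (interior P).Nonempty) (hl : IsFacetNormal P l) :
    FacesIsothetic P l P' l ∨ FacesIsothetic P l (-P') l := by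
  obtain ⟨Q, rfl | rfl, m, hm, hQ⟩ := h P (.inl rfl) l hl.1
  · exact Or.inl (hQ.of_isFacetNormal hP hint hl hm)
  · exact Or.inr (hQ.of_isFacetNormal hP hint hl hm)

theorem FacesMatch.isFacetNormal (h : FacesMatch {P, -P} {P', -P'})
    (hP' : IsConvexPolytope P') (hne : P'.Nonempty) (hl : IsFacetNormal P' l)
    (hl' : IsFacetNormal P' (-l)) : IsFacetNormal P l := by
  refine ⟨hl.1, (vectorSpan_toExposed_le_ker l P).antisymm ?_⟩
  obtain ⟨Q, rfl | rfl, m, -, hm⟩ := h P (.inl rfl) l hl.1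
  · exact hl.2.ge.trans (hm.vectorSpan_toExposed_le hP' hne)
  · exact (isFacetNormal_neg_iff.2 hl').2.ge.trans (hm.vectorSpan_toExposed_le hP'.neg hne.neg)

theorem exists_eq_vadd_of_facesMatch (hdim : 1 < finrank ℝ E) (hP : IsConvexPolytope P)
    (hP' : IsConvexPolytope P') (hPint : (interior P).Nonempty) (hP'int : (interior P').Nonempty)
    (h : FacesMatch {P, -P} {P', -P'}) (h' : FacesMatch {P', -P'} {P, -P})
    (hfacet : ∀ l, IsFacetNormal P l → FacesIsothetic P l (-P') l → FacesIsothetic P l P' l) :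
    ∃ x : E, P' = x +ᵥ P := by
  have hPfacet (l : StrongDual ℝ E) (hl : IsFacetNormal P l) : FacesIsothetic P l P' l :=
    (h.facesIsothetic_of_isFacetNormal hP hPint hl).elim id (hfacet l hl)
  refine hP.exists_eq_vadd_of_facets hdim hP' hPint hP'int fun l hl => ?_
  rcases hl with hl | hl
  · exact (hPfacet l hl).1
  rcases h'.facesIsothetic_of_isFacetNormal hP' hP'int hl with hiso | hiso
  · exact hiso.symm.1
  · have hlneg : IsFacetNormal P (-l) :=
      isFacetNormal_neg_iff.1 ⟨hl.1, hiso.vectorSpan_eq.trans hl.2⟩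
    have hl' : IsFacetNormal P' (-l) :=
      ⟨hlneg.1, (hPfacet _ hlneg).vectorSpan_eq.trans hlneg.2⟩
    exact (hPfacet l (h.isFacetNormal hP' (hP'int.mono interior_subset) hl hl')).1

theorem exists_eq_vadd_neg_of_facesMatch (hdim : 1 < finrank ℝ E) (hP : IsConvexPolytope P)
    (hP' : IsConvexPolytope P') (hPint : (interior P).Nonempty) (hP'int : (interior P').Nonempty)
    (h : FacesMatch {P, -P} {P', -P'}) (h' : FacesMatch {P', -P'} {P, -P})
    (hfacet : ∀ l, IsFacetNormal P l → FacesIsothetic P l P' l → FacesIsothetic P l (-P') l) :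
    ∃ x : E, P' = x +ᵥ -P := by
  obtain ⟨x, hx⟩ := exists_eq_vadd_of_facesMatch hdim hP hP'.neg hPint
    (interior_neg_nonempty hP'int) (by rwa [neg_neg, Set.pair_comm (-P')])
    (by rwa [neg_neg, Set.pair_comm (-P')]) (by rwa [neg_neg])
  exact ⟨-x, by rw [← neg_vadd_set, ← hx, neg_neg]⟩

theorem no_negative_facets_implies_translate_general (hdim : 1 < finrank ℝ E)
    (hP : IsConvexPolytope P) (hP' : IsConvexPolytope P') (hPint : (interior P).Nonempty)
    (hP'int : (interior P').Nonempty) (h : FacesMatch {P, -P} {P', -P'})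
    (h' : FacesMatch {P', -P'} {P, -P}) :
    ((∀ l, IsFacetNormal P l → FacesIsothetic P l (-P') l → FacesIsothetic P l P' l) →
      ∃ x : E, P' = x +ᵥ P) ∧
    ((∀ l, IsFacetNormal P l → FacesIsothetic P l P' l → FacesIsothetic P l (-P') l) →
      ∃ x : E, P' = x +ᵥ -P) ∧
    ((∀ l, IsFacetNormal P l → FacesIsothetic P l P' l ∧ FacesIsothetic P l (-P') l) →
      (∃ c : E, P = c +ᵥ -P) ∧ ∃ c : E, P' = c +ᵥ -P') := by
  have hpos := exists_eq_vadd_of_facesMatch hdim hP hP' hPint hP'int h h'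
  have hneg := exists_eq_vadd_neg_of_facesMatch hdim hP hP' hPint hP'int h h'
  refine ⟨hpos, hneg, fun hfacet => ?_⟩
  obtain ⟨x, hx⟩ := hpos fun l hl _ => (hfacet l hl).1
  obtain ⟨y, hy⟩ := hneg fun l hl _ => (hfacet l hl).2
  exact exists_eq_vadd_neg_of_eq_vadd hx hy

end Synisothetic

section EuclideanSpace

variable {P Q₁ Q₂ P₁ P₂ : Set (EuclideanSpace ℝ (Fin 3))}
  {l : StrongDual ℝ (EuclideanSpace ℝ (Fin 3))}

theorem IsPolytope.isConvexPolytope (hP : IsPolytope P) : IsConvexPolytope P :=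
  let ⟨S, hS⟩ := hP
  ⟨S, S.finite_toSet, hS⟩

theorem exists_unit_forall_exposedFace_eq (hl : l ≠ 0) :
    ∃ w : EuclideanSpace ℝ (Fin 3), ‖w‖ = 1 ∧ ∀ P, exposedFace P w = l.toExposed P := by
  set v := (InnerProductSpace.toDual ℝ (EuclideanSpace ℝ (Fin 3))).symm l
  have hv : v ≠ 0 := by simpa [v] using hl
  refine ⟨‖v‖⁻¹ • v, norm_smul_inv_norm hv, fun P => ?_⟩
  have hlv : innerSL ℝ (‖v‖⁻¹ • v) = ‖v‖⁻¹ • l := by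
    ext x
    simp [v, InnerProductSpace.toDual_symm_apply]
  change (innerSL ℝ (‖v‖⁻¹ • v)).toExposed P = l.toExposed P
  rw [hlv, toExposed_smul (inv_pos.2 (norm_pos_iff.2 hv))]

theorem exists_facesIsothetic_of_isothetic
    (h : ∀ F, IsProperFace P F → ∃ G, (IsProperFace Q₁ G ∧ Isothetic P F Q₁ G) ∨
      (IsProperFace Q₂ G ∧ Isothetic P F Q₂ G)) (hl : l ≠ 0) :
    ∃ Q ∈ ({Q₁, Q₂} : Set (Set (EuclideanSpace ℝ (Fin 3)))),
      ∃ m : StrongDual ℝ (EuclideanSpace ℝ (Fin 3)), m ≠ 0 ∧ FacesIsothetic P l Q m := by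
  obtain ⟨w, hw, hface⟩ := exists_unit_forall_exposedFace_eq hl
  have hne {v : EuclideanSpace ℝ (Fin 3)} (hv : ‖v‖ = 1) : innerSL ℝ v ≠ 0 := by
    rw [← norm_ne_zero_iff, innerSL_apply_norm, hv]
    exact one_ne_zero
  obtain ⟨_, ⟨⟨v, hv, rfl⟩, hiso⟩ | ⟨⟨v, hv, rfl⟩, hiso⟩⟩ := h _ ⟨w, hw, (hface P).symm⟩
  · exact ⟨Q₁, .inl rfl, innerSL ℝ v, hne hv, hiso⟩
  · exact ⟨Q₂, .inr rfl, innerSL ℝ v, hne hv, hiso⟩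

theorem Synisothetic.facesMatch (h : Synisothetic P₁ P₂ Q₁ Q₂) :
    FacesMatch {P₁, P₂} {Q₁, Q₂} := by
  rintro P (rfl | rfl) l hl
  · exact exists_facesIsothetic_of_isothetic h.1 hl
  · exact exists_facesIsothetic_of_isothetic h.2.1 hl

theorem Synisothetic.symm (h : Synisothetic P₁ P₂ Q₁ Q₂) : Synisothetic Q₁ Q₂ P₁ P₂ :=
  ⟨h.2.2.1, h.2.2.2, h.1, h.2.1⟩

theorem IsFacetNormal.exists_isFacetDir (hl : IsFacetNormal P l) :
    ∃ w, IsFacetDir P w ∧ ∀ Q, PosAlt P Q w ↔ FacesIsothetic P l Q l := by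
  obtain ⟨w, hw, hface⟩ := exists_unit_forall_exposedFace_eq hl.1
  refine ⟨w, ⟨hw, ?_⟩, fun Q => ?_⟩
  · have hker := Module.Dual.finrank_ker_add_one_of_ne_zero
      (f := (l : EuclideanSpace ℝ (Fin 3) →ₗ[ℝ] ℝ))
      fun h => hl.1 (ContinuousLinearMap.coe_injective h)
    rw [finrank_euclideanSpace_fin] at hker
    rw [hface, hl.2]
    exact Nat.succ_injective hker
  · simp only [PosAlt, hface, exists_and_right]
    exact and_congr_left fun _ => exists_eq_vadd_comm

end EuclideanSpace

/-- Let `(P, −P)` and `(P', −P')` be synisothetic.  A facet `P_w` is *positive* if only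
`PosAlt P P' w` holds, *negative* if only `PosAlt P (−P') w` holds, and *neutral* if both
hold.  If no facet of `P` is negative then `P'` is a translate of `P`; if no facet is
positive then `P'` is a translate of `−P`; if every facet is neutral then both `P` and
`P'` are centrally symmetric. -/
theorem no_negative_facets_implies_translate
    (P P' : Set (EuclideanSpace ℝ (Fin 3)))
    (hP : IsPolytope P) (hP' : IsPolytope P')
    (hPint : (interior P).Nonempty) (hP'int : (interior P').Nonempty)
    (hsyn : Synisothetic P (-P) P' (-P')) :
    ((∀ w, IsFacetDir P w → PosAlt P (-P') w → PosAlt P P' w) →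
      ∃ t : EuclideanSpace ℝ (Fin 3), P' = (t + ·) '' P) ∧
    ((∀ w, IsFacetDir P w → PosAlt P P' w → PosAlt P (-P') w) →
      ∃ t : EuclideanSpace ℝ (Fin 3), P' = (t + ·) '' (-P)) ∧
    ((∀ w, IsFacetDir P w → PosAlt P P' w ∧ PosAlt P (-P') w) →
      ((∃ c : EuclideanSpace ℝ (Fin 3), P = (c + ·) '' (-P)) ∧
        (∃ c : EuclideanSpace ℝ (Fin 3), P' = (c + ·) '' (-P')))) := by
  obtain ⟨hpos, hneg, hneutral⟩ := no_negative_facets_implies_translate_general (by simp)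
    hP.isConvexPolytope hP'.isConvexPolytope hPint hP'int hsyn.facesMatch hsyn.symm.facesMatch
  refine ⟨fun h => hpos fun l hl => ?_, fun h => hneg fun l hl => ?_,
    fun h => hneutral fun l hl => ?_⟩
  all_goals
    obtain ⟨w, hw, hiso⟩ := hl.exists_isFacetDir
    simpa only [hiso] using h w hw
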